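/- Characterization of defeasible non-provability: for every propositional defeasible theory T and literal q, T ⊢ -∂q if and only if M_∂(q)=False for every defeasible model M of T. -/

import Mathlib

/-- A literal is an atom or its negation. -/
inductive Lit (Atom : Type) where
  | pos : Atom → Lit Atom
  | neg : Atom → Lit Atom
  deriving DecidableEq

/-- The complement `~q` of a literal `q`. -/
def Lit.compl {Atom : Type} : Lit Atom → Lit Atom
  | .pos a => .neg a
  | .neg a => .pos a

/-- The three kinds of rules: strict, defeasible, defeater. -/
inductive RuleKind where
  | strict
  | defeasible
  | defeater
  deriving DecidableEq

/-- A rule: a kind, a finite set of literals as body (antecedent), and a head literal. -/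
structure DRule (Atom : Type) where
  kind : RuleKind
  body : Finset (Lit Atom)
  head : Lit Atom
  deriving DecidableEq

/-- A rule is strict-or-defeasible (a "supportive" rule). -/
def DRule.isSd {Atom : Type} (r : DRule Atom) : Prop :=
  r.kind = RuleKind.strict ∨ r.kind = RuleKind.defeasible

/-- A propositional defeasible theory: finite set of facts, finite set of rules,
and a superiority relation on rules. -/
structure DTheory (Atom : Type) where
  facts : Finset (Lit Atom)
  rules : Finset (DRule Atom)
  sup : DRule Atom → DRule Atom → Prop

/-- Acyclicity of the superiority relation. -/
def SupAcyclic {Atom : Type} (T : DTheory Atom) : Prop :=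
  ∀ r : DRule Atom, ¬ Relation.TransGen T.sup r r

/-- Conclusions: tagged literals +Δq, -Δq, +∂q, -∂q. -/
inductive Concl (Atom : Type) where
  | plusDelta : Lit Atom → Concl Atom
  | minusDelta : Lit Atom → Concl Atom
  | plusPartial : Lit Atom → Concl Atom
  | minusPartial : Lit Atom → Concl Atom
  deriving DecidableEq

/-- The inference rules of DL: `Licensed T prev c` holds when the conclusion `c`
may be appended to a derivation whose preceding part is `prev`. -/
def Licensed {Atom : Type} (T : DTheory Atom)
    (prev : List (Concl Atom)) : Concl Atom → Prop
  | .plusDelta q =>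
      q ∈ T.facts ∨
      ∃ r ∈ T.rules, r.kind = RuleKind.strict ∧ r.head = q ∧
        ∀ a ∈ r.body, Concl.plusDelta a ∈ prev
  | .minusDelta q =>
      q ∉ T.facts ∧
      ∀ r ∈ T.rules, r.kind = RuleKind.strict → r.head = q →
        ∃ a ∈ r.body, Concl.minusDelta a ∈ prev
  | .plusPartial q =>
      (Concl.plusDelta q ∈ prev) ∨
      ((∃ r ∈ T.rules, r.isSd ∧ r.head = q ∧
          ∀ a ∈ r.body, Concl.plusPartial a ∈ prev) ∧
       (Concl.minusDelta q.compl ∈ prev) ∧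
       ∀ s ∈ T.rules, s.head = q.compl →
         ((∃ a ∈ s.body, Concl.minusPartial a ∈ prev) ∨
          (∃ t ∈ T.rules, t.isSd ∧ t.head = q ∧ T.sup t s ∧
            ∀ a ∈ t.body, Concl.plusPartial a ∈ prev)))
  | .minusPartial q =>
      (Concl.minusDelta q ∈ prev) ∧
      ((∀ r ∈ T.rules, r.isSd → r.head = q →
          ∃ a ∈ r.body, Concl.minusPartial a ∈ prev) ∨
       (Concl.plusDelta q.compl ∈ prev) ∨
       (∃ s ∈ T.rules, s.head = q.compl ∧
          (∀ a ∈ s.body, Concl.plusPartial a ∈ prev) ∧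
          ∀ t ∈ T.rules, t.isSd → t.head = q →
            ((∃ a ∈ t.body, Concl.minusPartial a ∈ prev) ∨ ¬ T.sup t s)))

/-- A derivation: each element of the sequence is licensed given the preceding part. -/
def DLDerivation {Atom : Type} (T : DTheory Atom)
    (P : List (Concl Atom)) : Prop :=
  ∀ i : Fin P.length, Licensed T (P.take i) (P.get i)

/-- `T ⊢ c`: some derivation in `T` ends with conclusion `c`. -/
def DLProves {Atom : Type} (T : DTheory Atom) (c : Concl Atom) : Prop :=
  ∃ P : List (Concl Atom), DLDerivation T P ∧ P.getLast? = some c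

/-- A defeasible interpretation: two partial functions from literals to booleans
(modelled as `Option Bool`-valued functions), `del` for definite knowledge (Δ) and
`par` for defeasible belief (∂). -/
structure DInterp (Atom : Type) where
  del : Lit Atom → Option Bool
  par : Lit Atom → Option Bool

/-- The coherence conditions on defeasible interpretations: what is known is believed,
and what is not believed is not known. -/
def DInterp.Coherent {Atom : Type} (I : DInterp Atom) : Prop :=
  (∀ q : Lit Atom, I.del q = some true → I.par q = some true) ∧
  (∀ q : Lit Atom, I.par q = some false → I.del q = some false)

open Classical in
/-- Kleene conjunction of a partial boolean function over a finite set of literals: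
`False` if some member maps to `False`, `True` if every member maps to `True`,
undefined otherwise. -/
noncomputable def kleeneAll {Atom : Type} (f : Lit Atom → Option Bool)
    (S : Finset (Lit Atom)) : Option Bool :=
  if ∃ a ∈ S, f a = some false then some false
  else if ∀ a ∈ S, f a = some true then some true
  else none

/-- The four model conditions (MΔ+), (MΔ-), (M∂+), (M∂-). -/
def ModelConditions {Atom : Type} (T : DTheory Atom)
    (I : DInterp Atom) : Prop :=
  (∀ q : Lit Atom,
    I.del q = some true ↔
      (q ∈ T.facts ∨
       ∃ r ∈ T.rules, r.kind = RuleKind.strict ∧ r.head = q ∧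
         kleeneAll I.del r.body = some true)) ∧
  (∀ q : Lit Atom,
    I.del q = some false ↔
      (q ∉ T.facts ∧
       ∀ r ∈ T.rules, r.kind = RuleKind.strict → r.head = q →
         kleeneAll I.del r.body = some false)) ∧
  (∀ q : Lit Atom,
    I.par q = some true ↔
      (I.del q = some true ∨
       ((∃ r ∈ T.rules, r.isSd ∧ r.head = q ∧ kleeneAll I.par r.body = some true) ∧
        I.del q.compl = some false ∧
        ∀ s ∈ T.rules, s.head = q.compl →
          (kleeneAll I.par s.body = some false ∨
           ∃ t ∈ T.rules, t.isSd ∧ t.head = q ∧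
             kleeneAll I.par t.body = some true ∧ T.sup t s)))) ∧
  (∀ q : Lit Atom,
    I.par q = some false ↔
      (I.del q = some false ∧
       ((∀ r ∈ T.rules, r.isSd → r.head = q → kleeneAll I.par r.body = some false) ∨
        I.del q.compl = some true ∨
        (∃ s ∈ T.rules, s.head = q.compl ∧ kleeneAll I.par s.body = some true ∧
          ∀ t ∈ T.rules, t.isSd → t.head = q →
            (kleeneAll I.par t.body = some false ∨ ¬ T.sup t s)))))

/-- A defeasible model of `T`: a defeasible interpretation (coherent pair of partial
functions) satisfying the four model conditions. -/
def IsModel {Atom : Type} (T : DTheory Atom) (I : DInterp Atom) : Prop :=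
  I.Coherent ∧ ModelConditions T I

/-- A conclusion holds in an interpretation. -/
def DLHolds {Atom : Type} (I : DInterp Atom) : Concl Atom → Prop
  | .plusDelta q => I.del q = some true
  | .minusDelta q => I.del q = some false
  | .plusPartial q => I.par q = some true
  | .minusPartial q => I.par q = some false


/-!
The inference rules define a monotone operator `T.step` on sets of conclusions. Derivations being
finite and each rule having finitely many premises, the provable conclusions form its least fixed
point, whereas the models of `T` are exactly the interpretations whose set of true conclusions is a
fixed point. So it remains to see that the least fixed point comes from an interpretation, i.e.
never contains both `+q` and `-q`.

This follows from strong negation: the rule for each `-` tag is the formal negation of the rule for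
the corresponding `+` tag. Hence `T.step` commutes with `S ↦ {c | c.compl ∉ S}`, which therefore
sends the least fixed point `L` to another fixed point, and `L` is contained in it.
-/

variable {Atom : Type} {T : DTheory Atom} {S S' : Set (Concl Atom)} {c : Concl Atom}

namespace DTheory

/-- The premises of the inference rule for a conclusion hold in the set `S`. This is `Licensed`
with an arbitrary set of conclusions in place of the preceding part of a derivation. -/
def Licenses (T : DTheory Atom) (S : Set (Concl Atom)) : Concl Atom → Prop
  | .plusDelta q =>
      q ∈ T.facts ∨
      ∃ r ∈ T.rules, r.kind = .strict ∧ r.head = q ∧ ∀ a ∈ r.body, .plusDelta a ∈ S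
  | .minusDelta q =>
      q ∉ T.facts ∧
      ∀ r ∈ T.rules, r.kind = .strict → r.head = q → ∃ a ∈ r.body, .minusDelta a ∈ S
  | .plusPartial q =>
      .plusDelta q ∈ S ∨
      ((∃ r ∈ T.rules, r.isSd ∧ r.head = q ∧ ∀ a ∈ r.body, .plusPartial a ∈ S) ∧
       .minusDelta q.compl ∈ S ∧
       ∀ s ∈ T.rules, s.head = q.compl →
         ((∃ a ∈ s.body, .minusPartial a ∈ S) ∨
          ∃ t ∈ T.rules, t.isSd ∧ t.head = q ∧ T.sup t s ∧ ∀ a ∈ t.body, .plusPartial a ∈ S))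
  | .minusPartial q =>
      .minusDelta q ∈ S ∧
      ((∀ r ∈ T.rules, r.isSd → r.head = q → ∃ a ∈ r.body, .minusPartial a ∈ S) ∨
       .plusDelta q.compl ∈ S ∨
       ∃ s ∈ T.rules, s.head = q.compl ∧ (∀ a ∈ s.body, .plusPartial a ∈ S) ∧
         ∀ t ∈ T.rules, t.isSd → t.head = q →
           ((∃ a ∈ t.body, .minusPartial a ∈ S) ∨ ¬ T.sup t s))

theorem Licenses.mono (hS : S ⊆ S') (h : T.Licenses S c) : T.Licenses S' c := by
  cases c <;> simp only [Licenses] at h ⊢ <;> grind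

/-- The immediate consequence operator: the conclusions obtained from `S` by applying one inference
rule of `T`. -/
def step (T : DTheory Atom) : Set (Concl Atom) →o Set (Concl Atom) where
  toFun S := {c | T.Licenses S c}
  monotone' _ _ hS _ := Licenses.mono hS

theorem mem_step : c ∈ T.step S ↔ T.Licenses S c := Iff.rfl

theorem licensed_iff_mem_step {P : List (Concl Atom)} :
    Licensed T P c ↔ c ∈ T.step {x | x ∈ P} := by
  cases c <;> rfl

end DTheory

namespace Concl

/-- The literal that a conclusion is about, stripped of its tag. -/
def lit : Concl Atom → Lit Atom
  | .plusDelta q | .minusDelta q | .plusPartial q | .minusPartial q => q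

/-- The conclusion with the same literal and the opposite sign of the tag. -/
def compl : Concl Atom → Concl Atom
  | .plusDelta q => .minusDelta q
  | .minusDelta q => .plusDelta q
  | .plusPartial q => .minusPartial q
  | .minusPartial q => .plusPartial q

theorem forall_iff {p : Concl Atom → Prop} :
    (∀ c, p c) ↔ (∀ q, p (.plusDelta q)) ∧ (∀ q, p (.minusDelta q)) ∧
      (∀ q, p (.plusPartial q)) ∧ ∀ q, p (.minusPartial q) :=
  ⟨fun h ↦ ⟨fun _ ↦ h _, fun _ ↦ h _, fun _ ↦ h _, fun _ ↦ h _⟩,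
    fun ⟨h₁, h₂, h₃, h₄⟩ ↦ Concl.rec h₁ h₂ h₃ h₄⟩

theorem finite_preimage_lit {A : Set (Lit Atom)} (hA : A.Finite) : (lit ⁻¹' A).Finite := by
  refine hA.preimage' fun q _ ↦ Set.Finite.subset
    (Set.toFinite {.plusDelta q, .minusDelta q, .plusPartial q, .minusPartial q}) ?_
  rintro (_ | _ | _ | _) rfl <;> simp [lit]

end Concl

namespace DTheory

/-- The literals that can occur in the premises of the inference rules for conclusions about `q`. -/
def relevantLits (T : DTheory Atom) (q : Lit Atom) : Set (Lit Atom) :=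
  {q, q.compl} ∪ ⋃ r ∈ T.rules, r.body

theorem finite_relevantLits (T : DTheory Atom) (q : Lit Atom) : (T.relevantLits q).Finite :=
  (Set.toFinite _).union (T.rules.finite_toSet.biUnion fun r _ ↦ r.body.finite_toSet)

theorem mem_step_inter_relevantLits (h : c ∈ T.step S) :
    c ∈ T.step (S ∩ Concl.lit ⁻¹' T.relevantLits c.lit) := by
  have hbody : ∀ r ∈ T.rules, ∀ a ∈ r.body, a ∈ T.relevantLits c.lit := fun r hr a ha ↦
    Or.inr (Set.mem_biUnion hr ha)
  have hlit : c.lit ∈ T.relevantLits c.lit := by simp [relevantLits]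
  have hcompl : c.lit.compl ∈ T.relevantLits c.lit := by simp [relevantLits]
  cases c <;>
    simp only [mem_step, Licenses, Set.mem_inter_iff, Set.mem_preimage, Concl.lit] at * <;> grind

theorem exists_finite_mem_step (h : c ∈ T.step S) :
    ∃ F ⊆ S, F.Finite ∧ c ∈ T.step F :=
  ⟨_, Set.inter_subset_left,
    (Concl.finite_preimage_lit (T.finite_relevantLits c.lit)).inter_of_right S,
    mem_step_inter_relevantLits h⟩

end DTheory

namespace DLDerivation

variable {P Q : List (Concl Atom)}

theorem concat_iff : DLDerivation T (P ++ [c]) ↔ DLDerivation T P ∧ Licensed T P c := by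
  simp only [DLDerivation, Fin.forall_iff, List.length_append, List.length_singleton,
    Nat.forall_lt_succ_right', List.get_eq_getElem, List.take_left, List.getElem_concat_length]
  refine and_congr_left' (forall₂_congr fun i hi ↦ ?_)
  rw [List.take_append_of_le_length hi.le, List.getElem_append_left hi]

theorem append (hP : DLDerivation T P) (hQ : DLDerivation T Q) : DLDerivation T (P ++ Q) := by
  induction Q using List.reverseRecOn with
  | nil => simpa using hP
  | append_singleton Q c ih =>
    obtain ⟨hQ, hc⟩ := concat_iff.1 hQ
    rw [← List.append_assoc, concat_iff]
    rw [DTheory.licensed_iff_mem_step] at hc ⊢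
    exact ⟨ih hQ, T.step.mono (fun x hx ↦ List.mem_append_right P hx) hc⟩

theorem subset_lfp (hP : DLDerivation T P) : {x | x ∈ P} ⊆ T.step.lfp := by
  induction P using List.reverseRecOn with
  | nil => simp
  | append_singleton P c ih =>
    obtain ⟨hP, hc⟩ := concat_iff.1 hP
    have hc_lfp : c ∈ T.step.lfp := by
      rw [← T.step.map_lfp]
      exact T.step.mono (ih hP) (DTheory.licensed_iff_mem_step.1 hc)
    simpa [Set.subset_def, or_imp, forall_and, hc_lfp] using ih hP

end DLDerivation

theorem dlProves_iff_exists_licensed :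
    DLProves T c ↔ ∃ P, DLDerivation T P ∧ Licensed T P c := by
  simp only [DLProves, List.getLast?_eq_some_iff]
  constructor
  · rintro ⟨_, hP, P, rfl⟩
    exact ⟨P, DLDerivation.concat_iff.1 hP⟩
  · rintro ⟨P, hP⟩
    exact ⟨P ++ [c], DLDerivation.concat_iff.2 hP, P, rfl⟩

theorem exists_dlDerivation_of_finite {F : Set (Concl Atom)} (hF : F.Finite)
    (h : ∀ c ∈ F, DLProves T c) : ∃ P, DLDerivation T P ∧ F ⊆ {x | x ∈ P} := by
  induction F, hF using Set.Finite.induction_on with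
  | empty => exact ⟨[], fun i ↦ i.elim0, Set.empty_subset _⟩
  | insert _ _ ih =>
    rw [Set.forall_mem_insert] at h
    obtain ⟨P, hP, hFP⟩ := ih h.2
    obtain ⟨Q, hQ, hcQ⟩ := h.1
    exact ⟨P ++ Q, hP.append hQ, Set.insert_subset
      (List.mem_append_right P (List.mem_of_getLast? hcQ))
      fun x hx ↦ List.mem_append_left Q (hFP hx)⟩

theorem dlProves_iff_mem_lfp_step : DLProves T c ↔ c ∈ T.step.lfp := by
  constructor
  · rintro ⟨P, hP, hc⟩
    exact hP.subset_lfp (List.mem_of_getLast? hc)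
  · suffices T.step.lfp ⊆ {c | DLProves T c} from @this c
    refine T.step.lfp_le fun c hc ↦ dlProves_iff_exists_licensed.2 ?_
    obtain ⟨F, hFS, hF, hcF⟩ := DTheory.exists_finite_mem_step hc
    obtain ⟨P, hP, hFP⟩ := exists_dlDerivation_of_finite hF hFS
    exact ⟨P, hP, DTheory.licensed_iff_mem_step.2 (T.step.mono hFP hcF)⟩

/-- The strong negation of a set of conclusions: everything that `S` does not refute. Thus `S` is
consistent when `S ⊆ strongNegation S`. -/
def strongNegation (S : Set (Concl Atom)) : Set (Concl Atom) :=
  {c | c.compl ∉ S}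

theorem step_strongNegation (T : DTheory Atom) (S : Set (Concl Atom)) :
    T.step (strongNegation S) = strongNegation (T.step S) := by
  ext c
  cases c <;>
    simp only [DTheory.mem_step, DTheory.Licenses, strongNegation, Set.mem_ofPred_eq,
      Concl.compl] <;>
    grind

theorem lfp_step_subset_strongNegation (T : DTheory Atom) :
    T.step.lfp ⊆ strongNegation T.step.lfp :=
  T.step.lfp_le_fixed (by rw [step_strongNegation, T.step.map_lfp])

section Kleene

variable {f : Lit Atom → Option Bool} {A : Finset (Lit Atom)}

theorem kleeneAll_eq_some_false : kleeneAll f A = some false ↔ ∃ a ∈ A, f a = some false := by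
  unfold kleeneAll
  split_ifs <;> simp_all

theorem kleeneAll_eq_some_true : kleeneAll f A = some true ↔ ∀ a ∈ A, f a = some true := by
  unfold kleeneAll
  split_ifs with hfalse htrue
  · obtain ⟨a, ha, hfa⟩ := hfalse
    simpa using ⟨a, ha, by simp [hfa]⟩
  · simpa using htrue
  · simpa using htrue

end Kleene

theorem modelConditions_iff_isFixedPt {I : DInterp Atom} :
    ModelConditions T I ↔ Function.IsFixedPt T.step {c | DLHolds I c} := by
  rw [Function.IsFixedPt, eq_comm, Set.ext_iff, Concl.forall_iff]
  simp only [ModelConditions, kleeneAll_eq_some_false, kleeneAll_eq_some_true, DTheory.mem_step,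
    DTheory.Licenses, Set.mem_ofPred_eq, DLHolds, and_comm (a := T.sup _ _)]

theorem isModel_iff_isFixedPt {I : DInterp Atom} :
    IsModel T I ↔ Function.IsFixedPt T.step {c | DLHolds I c} := by
  rw [IsModel, modelConditions_iff_isFixedPt, and_iff_right_iff_imp]
  intro hI
  have holds_iff (c : Concl Atom) : DLHolds I c ↔ T.Licenses {c | DLHolds I c} c :=
    (Set.ext_iff.1 hI c).symm
  -- Coherence is built into the rules: `+Δq` licenses `+∂q`, and `-∂q` requires `-Δq`.
  exact ⟨fun q hq ↦ (holds_iff (.plusPartial q)).2 (.inl hq),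
    fun q hq ↦ ((holds_iff (.minusPartial q)).1 hq).1⟩

open Classical in
/-- The interpretation in which exactly the conclusions in `S` hold. When `S` contains two
complementary conclusions, the positive one prevails. -/
noncomputable def DInterp.ofSet (S : Set (Concl Atom)) : DInterp Atom where
  del q := if .plusDelta q ∈ S then some true else if .minusDelta q ∈ S then some false else none
  par q := if .plusPartial q ∈ S then some true
    else if .minusPartial q ∈ S then some false else none

theorem DInterp.ofPred_dlHolds_ofSet (hS : S ⊆ strongNegation S) :
    {c | DLHolds (.ofSet S) c} = S := by
  ext c
  have hc : c ∈ S → c.compl ∉ S := @hS c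
  cases c <;> simp only [Concl.compl, Set.mem_ofPred_eq, DLHolds, DInterp.ofSet] at * <;> grind

theorem DL_minusPartial_char_general (T : DTheory Atom) (c : Concl Atom) :
    DLProves T c ↔ ∀ I : DInterp Atom, IsModel T I → DLHolds I c := by
  rw [dlProves_iff_mem_lfp_step]
  constructor
  · intro hc I hI
    exact T.step.lfp_le_fixed (isModel_iff_isFixedPt.1 hI) hc
  · intro h
    have holds_eq : {c | DLHolds (.ofSet T.step.lfp) c} = T.step.lfp :=
      DInterp.ofPred_dlHolds_ofSet (lfp_step_subset_strongNegation T)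
    have isModel : IsModel T (.ofSet T.step.lfp) :=
      isModel_iff_isFixedPt.2 (holds_eq.symm ▸ T.step.isFixedPt_lfp)
    exact holds_eq.subset (h _ isModel)

/-- Characterization of defeasible non-provability. -/
theorem DL_minusPartial_char {Atom : Type} [Countable Atom] [DecidableEq Atom]
    (T : DTheory Atom) (hacyc : SupAcyclic T) (q : Lit Atom) :
    DLProves T (Concl.minusPartial q) ↔
      ∀ I : DInterp Atom, IsModel T I → I.par q = some false :=
  DL_minusPartial_char_general T (.minusPartial q)
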